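/- Fix an integer d ≥ 2. Suppose L ⊆ Σ* is regular but not sparse, satisfies L = L* (L equals its own Kleene star), and satisfies condition (†). Then for every N ∈ ℕ there exist K ∈ ℕ and words d₀,…,d_N, e₀,…,e_N ∈ Σ* such that for all i, j ≤ N: there exists a word ρ ∈ Σ* of length K with [ρ] = [d_i] + [e_j] and ρ ∈ L, if and only if i ≤ j. -/

import Mathlib

/-- A language is regular if it is recognized by a DFA with finitely many states. -/
def RegularLang {α : Type} (L : Set (List α)) : Prop :=
  ∃ (Q : Type) (_ : Fintype Q) (M : DFA α Q), M.accepts = L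

/-- A language is sparse if it is regular and the number of its words of length at most `k`
is bounded by `C·(k^p + 1)`. -/
def SparseLang {α : Type} (L : Set (List α)) : Prop :=
  RegularLang L ∧ ∃ C p : ℕ, ∀ k : ℕ,
    {σ ∈ L | σ.length ≤ k}.Finite ∧ {σ ∈ L | σ.length ≤ k}.ncard ≤ C * (k ^ p + 1)

/-- Evaluation of a word over `Σ = {0,…,d−1}` base `d`, least significant digit first. -/
def evalNat {d : ℕ} : List (Fin d) → ℕ
  | [] => 0
  | k :: σ => (k : ℕ) + d * evalNat σ

/-- The Kleene star of a language: all finite concatenations of its words. -/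
def KStarLang {α : Type} (L : Set (List α)) : Set (List α) :=
  {σ | ∃ ws : List (List α), (∀ w ∈ ws, w ∈ L) ∧ σ = ws.flatten}

/-- Condition (†): there are `r` and `s ≥ 1` such that the set of words of `L` of length in
`r + sℕ` is infinite and has a forbidden suffix. -/
def CondDagger {d : ℕ} (L : Set (List (Fin d))) : Prop :=
  ∃ r s : ℕ, 1 ≤ s ∧
    {σ ∈ L | ∃ k : ℕ, σ.length = r + s * k}.Infinite ∧
    ∃ τ : List (Fin d), ∀ ρ ∈ L, (∃ k : ℕ, ρ.length = r + s * k) → ¬ τ <:+ ρ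

/-!
Let `W` be the word of `L` of a suitable large length with the largest value. By pigeonhole `W` has
many prefixes, of lengths `C * m₀ < C * m₁ < ⋯`, with the same left quotient `q`. As `L` is closed
under concatenation and has two distinct words of equal length, two words `w₀`, `w₁` of length `C`
with `[w₀] < [w₁]` can be prepended to the words of `q` without leaving `q`. Replacing the blocks
`mᵢ, …, mⱼ - 1` of `W` by copies of such a word `w` stays in `L` and lowers the value of `W` by
`G_w j - G_w i`, where `G_w i` is the value of the `i`-th prefix minus that of `w ^ mᵢ`.
Maximality of `W` makes `G_w` monotone for `w = w₁`, hence strictly monotone for the smaller word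
`w = w₀`. With `G := G_{w₀}`, the number `[W] - (G j - G i)` is therefore the value of a word of
`L` of the given length when `i ≤ j`, and exceeds all such values when `j < i`.
-/

section Pigeonhole

variable {β : Type*} [Finite β]

theorem exists_strictMono_forall_lt_and_eq (N : ℕ) :
    ∃ M : ℕ, ∀ f : ℕ → β, ∃ (b : β) (m : Fin (N + 1) → ℕ),
      StrictMono m ∧ ∀ i, m i < M ∧ f (m i) = b := by
  classical
  have := Fintype.ofFinite β
  refine ⟨Fintype.card β * N + 1, fun f => ?_⟩
  obtain ⟨b, -, hb⟩ := Finset.exists_lt_card_fiber_of_mul_lt_card_of_maps_to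
    (s := Finset.range (Fintype.card β * N + 1)) (n := N) (fun k _ => Finset.mem_univ (f k))
    (by simp)
  obtain ⟨T, hT, hTcard⟩ := Finset.exists_subset_card_eq (Nat.succ_le_of_lt hb)
  refine ⟨b, T.orderEmbOfFin hTcard, (T.orderEmbOfFin hTcard).strictMono, fun i => ?_⟩
  simpa using hT (T.orderEmbOfFin_mem hTcard i)

theorem exists_ne_zero_forall_of_forall_dvd {P : β → ℕ → Prop}
    (hP : ∀ b c c', c ∣ c' → c' ≠ 0 → P b c → P b c') (h : ∀ b, ∃ c ≠ 0, P b c) :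
    ∃ C ≠ 0, ∀ b, P b C := by
  have := Fintype.ofFinite β
  choose c hc hPc using h
  have hprod : ∏ b, c b ≠ 0 := Finset.prod_ne_zero_iff.mpr fun b _ => hc b
  exact ⟨∏ b, c b, hprod, fun b =>
    hP b _ _ (Finset.dvd_prod_of_mem c (Finset.mem_univ b)) hprod (hPc b)⟩

end Pigeonhole

theorem exists_add_mem_iff_le_of_strictMono {ι : Type*} [LinearOrder ι] [OrderBot ι] {A : Set ℕ}
    {B : ℕ} (hB : B ∈ upperBounds A) {G : ι → ℤ} (hG : StrictMono G)
    (hmem : ∀ i j, i ≤ j → ∃ n ∈ A, (n : ℤ) = B - (G j - G i)) :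
    ∃ a b : ι → ℕ, ∀ i j, a i + b j ∈ A ↔ i ≤ j := by
  have hsum (i j : ι) : (((G i - G ⊥).toNat + (B - (G j - G ⊥)).toNat : ℕ) : ℤ)
      = B - (G j - G i) := by
    have hbot : G ⊥ ≤ G i := hG.monotone bot_le
    obtain ⟨n, -, hn⟩ := hmem ⊥ j bot_le
    omega
  refine ⟨fun i => (G i - G ⊥).toNat, fun j => (B - (G j - G ⊥)).toNat,
    fun i j => ⟨fun hA => ?_, fun hij => ?_⟩⟩
  · by_contra! hji
    have hle : (G i - G ⊥).toNat + (B - (G j - G ⊥)).toNat ≤ B := hB hA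
    have hlt := hG hji
    have := hsum i j
    omega
  · obtain ⟨n, hnA, hn⟩ := hmem i j hij
    have hval : (G i - G ⊥).toNat + (B - (G j - G ⊥)).toNat = n :=
      Nat.cast_injective ((hsum i j).trans hn.symm)
    exact hval ▸ hnA

section Words

variable {α : Type*} {u v : List α}

theorem nontrivial_of_ne_of_length_eq (huv : u ≠ v) (hlen : u.length = v.length) :
    Nontrivial α := by
  by_contra h
  rw [not_nontrivial_iff_subsingleton] at h
  exact huv (List.ext_getElem hlen fun _ _ _ => Subsingleton.elim _ _)

theorem length_ne_zero_of_ne_of_length_eq (huv : u ≠ v) (hlen : u.length = v.length) :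
    u.length ≠ 0 := by
  intro hu
  have hv : v.length = 0 := hlen ▸ hu
  exact huv ((List.eq_nil_of_length_eq_zero hu).trans (List.eq_nil_of_length_eq_zero hv).symm)

/-- The power `w ^ k` of a word in the free monoid, with words kept as lists so that `evalNat`
applies to it. -/
def wordPow (w : List α) (k : ℕ) : List α :=
  (List.replicate k w).flatten

theorem wordPow_zero (w : List α) : wordPow w 0 = [] := rfl

theorem wordPow_succ (w : List α) (k : ℕ) : wordPow w (k + 1) = w ++ wordPow w k := rfl

theorem wordPow_add (w : List α) (k l : ℕ) : wordPow w (k + l) = wordPow w k ++ wordPow w l := by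
  simp only [wordPow, List.replicate_add, List.flatten_append]

theorem length_wordPow (w : List α) (k : ℕ) : (wordPow w k).length = w.length * k := by
  simp only [wordPow, List.length_flatten, List.map_replicate, List.sum_replicate, smul_eq_mul,
    mul_comm]

theorem wordPow_ne_wordPow (huv : u ≠ v) (hlen : u.length = v.length) {k : ℕ} (hk : k ≠ 0) :
    wordPow u k ≠ wordPow v k := by
  obtain ⟨k, rfl⟩ := Nat.exists_eq_succ_of_ne_zero hk
  exact fun h => huv (List.append_inj h hlen).1

theorem wordPow_mem {S : Set (List α)} (hS : ∀ a ∈ S, ∀ b ∈ S, a ++ b ∈ S) {w : List α}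
    (hw : w ∈ S) {k : ℕ} (hk : k ≠ 0) : wordPow w k ∈ S := by
  induction k, Nat.one_le_iff_ne_zero.mpr hk using Nat.le_induction with
  | base => simpa only [wordPow_succ, wordPow_zero, List.append_nil]
  | succ k hk' ih => exact hS w hw _ (ih (Nat.one_le_iff_ne_zero.mp hk'))

end Words

theorem append_mem_of_eq_kStarLang {α : Type} {L : Set (List α)} (hL : L = KStarLang L)
    {a b : List α} (ha : a ∈ L) (hb : b ∈ L) : a ++ b ∈ L := by
  rw [hL]
  exact ⟨[a, b], by simp [ha, hb], by simp⟩

theorem exists_ne_length_eq_of_not_sparseLang {α : Type} {L : Set (List α)}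
    (hreg : RegularLang L) (hns : ¬ SparseLang L) :
    ∃ u ∈ L, ∃ v ∈ L, u ≠ v ∧ u.length = v.length := by
  by_contra! h
  refine hns ⟨hreg, 1, 1, fun k => ?_⟩
  have hmaps : Set.MapsTo List.length {σ ∈ L | σ.length ≤ k} (Finset.range (k + 1)) := by
    intro σ hσ
    simpa [Nat.lt_succ_iff] using hσ.2
  have hinj : Set.InjOn List.length {σ ∈ L | σ.length ≤ k} := by
    intro σ hσ τ hτ hlen
    by_contra hne
    exact h σ hσ.1 τ hτ.1 hne hlen
  refine ⟨Set.Finite.of_injOn hmaps hinj (Finset.finite_toSet _), ?_⟩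
  simpa using Set.ncard_le_ncard_of_injOn List.length hmaps hinj (Finset.finite_toSet _)

section Loops

variable {α : Type*} {L q : Language α}

/-- The words that can be prepended to the words of `q` without leaving `q`. When `q` is a left
quotient of a language, that is, a state of its minimal automaton, these include the labels of the
loops at that state. -/
def loopWords (q : Language α) : Set (List α) :=
  {w | ∀ t ∈ q, w ++ t ∈ q}

theorem append_mem_loopWords {a b : List α} (ha : a ∈ loopWords q) (hb : b ∈ loopWords q) :
    a ++ b ∈ loopWords q := by
  intro t ht
  rw [List.append_assoc]
  exact ha _ (hb t ht)

theorem wordPow_mem_loopWords {w : List α} (hw : w ∈ loopWords q) (k : ℕ) :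
    wordPow w k ∈ loopWords q := by
  rcases eq_or_ne k 0 with rfl | hk
  · exact fun t ht => ht
  · exact wordPow_mem (fun _ ha _ hb => append_mem_loopWords ha hb) hw hk

/-- Two distinct loop words of length `c` at `q`: the branching at a state of the automaton of a
non-sparse language. -/
def HasLoopPair (q : Language α) (c : ℕ) : Prop :=
  ∃ w₀ ∈ loopWords q, ∃ w₁ ∈ loopWords q, w₀ ≠ w₁ ∧ w₀.length = c ∧ w₁.length = c

theorem HasLoopPair.of_dvd {c c' : ℕ} (h : HasLoopPair q c) (hdvd : c ∣ c') (hc' : c' ≠ 0) :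
    HasLoopPair q c' := by
  obtain ⟨k, rfl⟩ := hdvd
  obtain ⟨w₀, h₀, w₁, h₁, hne, hlen₀, hlen₁⟩ := h
  exact ⟨wordPow w₀ k, wordPow_mem_loopWords h₀ k, wordPow w₁ k, wordPow_mem_loopWords h₁ k,
    wordPow_ne_wordPow hne (hlen₀.trans hlen₁.symm) (right_ne_zero_of_mul hc'),
    by rw [length_wordPow, hlen₀], by rw [length_wordPow, hlen₁]⟩

theorem append_append_mem_loopWords_leftQuotient (happ : ∀ a ∈ L, ∀ b ∈ L, a ++ b ∈ L)
    {x z s : List α} (hxz : x ++ z ∈ L) (hs : s ∈ L) :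
    z ++ s ++ x ∈ loopWords (L.leftQuotient x) := by
  intro t ht
  have hmem : x ++ z ++ s ++ (x ++ t) ∈ L := happ _ (happ _ hxz s hs) _ ht
  rw [Language.mem_leftQuotient]
  simpa only [List.append_assoc] using hmem

theorem exists_hasLoopPair_leftQuotient (happ : ∀ a ∈ L, ∀ b ∈ L, a ++ b ∈ L) {u v : List α}
    (hu : u ∈ L) (hv : v ∈ L) (huv : u ≠ v) (hlen : u.length = v.length) (x : List α) :
    ∃ c ≠ 0, HasLoopPair (L.leftQuotient x) c := by
  have hu0 : u.length ≠ 0 := length_ne_zero_of_ne_of_length_eq huv hlen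
  by_cases h : ∃ z, x ++ z ∈ L
  · obtain ⟨z, hxz⟩ := h
    refine ⟨(z ++ u ++ x).length, ?_,
      z ++ u ++ x, append_append_mem_loopWords_leftQuotient happ hxz hu,
      z ++ v ++ x, append_append_mem_loopWords_leftQuotient happ hxz hv,
      by simpa using huv, rfl, by simp [hlen]⟩
    simp only [List.length_append]
    omega
  · exact ⟨u.length, hu0, u, fun t ht => (h ⟨t, ht⟩).elim, v, fun t ht => (h ⟨t, ht⟩).elim,
      huv, rfl, hlen.symm⟩

theorem exists_forall_hasLoopPair_leftQuotient (hreg : L.IsRegular)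
    (happ : ∀ a ∈ L, ∀ b ∈ L, a ++ b ∈ L) {u v : List α} (hu : u ∈ L) (hv : v ∈ L) (huv : u ≠ v)
    (hlen : u.length = v.length) : ∃ C ≠ 0, ∀ x, HasLoopPair (L.leftQuotient x) C := by
  have := hreg.finite_range_leftQuotient.to_subtype
  obtain ⟨C, hC, h⟩ := exists_ne_zero_forall_of_forall_dvd
    (P := fun q : Set.range L.leftQuotient => HasLoopPair q.1)
    (fun _ _ _ hdvd hc' hpair => hpair.of_dvd hdvd hc')
    (by rintro ⟨_, x, rfl⟩; exact exists_hasLoopPair_leftQuotient happ hu hv huv hlen x)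
  exact ⟨C, hC, fun x => h ⟨_, x, rfl⟩⟩

end Loops

section Splice

variable {α : Type*} {W w : List α} {k l : ℕ}

/-- The word `W`, cut into blocks of the length of `w`, with the blocks `k, …, l - 1` replaced by
copies of `w`. -/
def spliceWord (W w : List α) (k l : ℕ) : List α :=
  W.take (w.length * k) ++ (wordPow w (l - k) ++ W.drop (w.length * l))

theorem length_spliceWord (hkl : k ≤ l) (hl : w.length * l ≤ W.length) :
    (spliceWord W w k l).length = W.length := by
  have hk : w.length * k ≤ w.length * l := Nat.mul_le_mul_left _ hkl
  simp only [spliceWord, List.length_append, List.length_take, List.length_drop, length_wordPow,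
    Nat.mul_sub]
  omega

theorem spliceWord_mem {L q : Language α} (hW : W ∈ L) (hw : w ∈ loopWords q)
    (hk : L.leftQuotient (W.take (w.length * k)) = q)
    (hl : L.leftQuotient (W.take (w.length * l)) = q) : spliceWord W w k l ∈ L := by
  have hdrop : W.drop (w.length * l) ∈ q := by
    rwa [← hl, Language.mem_leftQuotient, List.take_append_drop]
  rw [spliceWord, ← Language.mem_leftQuotient, hk]
  exact wordPow_mem_loopWords hw _ _ hdrop

end Splice

section Value

variable {d : ℕ}

theorem evalNat_eq_ofDigits (σ : List (Fin d)) :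
    evalNat σ = Nat.ofDigits d (σ.map Fin.val) := by
  induction σ with
  | nil => rfl
  | cons k σ ih => rw [evalNat, ih, List.map_cons, Nat.ofDigits_cons]

theorem evalNat_append (a b : List (Fin d)) :
    evalNat (a ++ b) = evalNat a + d ^ a.length * evalNat b := by
  simp only [evalNat_eq_ofDigits, List.map_append, Nat.ofDigits_append, List.length_map]

theorem eq_of_evalNat_eq_of_length_eq (hd : 1 < d) {a b : List (Fin d)}
    (hlen : a.length = b.length) (h : evalNat a = evalNat b) : a = b := by
  rw [evalNat_eq_ofDigits, evalNat_eq_ofDigits] at h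
  refine List.map_injective_iff.mpr Fin.val_injective
    (Nat.ofDigits_inj_of_len_eq hd (by simpa using hlen) ?_ ?_ h) <;> simp

theorem evalNat_surjective (hd : 1 < d) :
    Function.Surjective (evalNat : List (Fin d) → ℕ) := by
  intro n
  lift Nat.digits d n to List (Fin d) using fun _ hk => Nat.digits_lt_base hd hk with σ hσ
  exact ⟨σ, by rw [evalNat_eq_ofDigits, hσ, Nat.ofDigits_digits]⟩

theorem exists_mem_length_eq_forall_evalNat_le {L : Set (List (Fin d))} {ρ₀ : List (Fin d)}
    (hρ₀ : ρ₀ ∈ L) : ∃ W ∈ L, W.length = ρ₀.length ∧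
      ∀ ρ ∈ L, ρ.length = W.length → evalNat ρ ≤ evalNat W := by
  obtain ⟨W, ⟨hWL, hW⟩, hmax⟩ := Set.exists_max_image {ρ ∈ L | ρ.length = ρ₀.length} evalNat
    ((List.finite_length_eq (Fin d) ρ₀.length).subset fun _ h => h.2) ⟨ρ₀, hρ₀, rfl⟩
  exact ⟨W, hWL, hW, fun ρ hρ hlen => hmax ρ ⟨hρ, hlen.trans hW⟩⟩

theorem HasLoopPair.exists_evalNat_lt (hd : 1 < d) {q : Language (Fin d)} {c : ℕ}
    (h : HasLoopPair q c) : ∃ w₀ ∈ loopWords q, ∃ w₁ ∈ loopWords q,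
      w₀.length = c ∧ w₁.length = c ∧ evalNat w₀ < evalNat w₁ := by
  obtain ⟨w₀, h₀, w₁, h₁, hne, hlen₀, hlen₁⟩ := h
  rcases lt_trichotomy (evalNat w₀) (evalNat w₁) with hlt | heq | hlt
  · exact ⟨w₀, h₀, w₁, h₁, hlen₀, hlen₁, hlt⟩
  · exact (hne (eq_of_evalNat_eq_of_length_eq hd (hlen₀.trans hlen₁.symm) heq)).elim
  · exact ⟨w₁, h₁, w₀, h₀, hlen₁, hlen₀, hlt⟩

variable {W w w₀ w₁ : List (Fin d)} {k l : ℕ}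

theorem evalNat_wordPow_lt_evalNat_wordPow (hlen : w₀.length = w₁.length)
    (hlt : evalNat w₀ < evalNat w₁) (hk : k ≠ 0) :
    evalNat (wordPow w₀ k) < evalNat (wordPow w₁ k) := by
  induction k, Nat.one_le_iff_ne_zero.mpr hk using Nat.le_induction with
  | base => simpa only [wordPow_succ, wordPow_zero, List.append_nil]
  | succ k hk' ih =>
    rw [wordPow_succ, wordPow_succ, evalNat_append, evalNat_append, hlen]
    exact add_lt_add_of_lt_of_le hlt
      (Nat.mul_le_mul_left _ (ih (Nat.one_le_iff_ne_zero.mp hk')).le)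

theorem evalNat_spliceWord_lt_evalNat_spliceWord (hd : 0 < d) (hlen : w₀.length = w₁.length)
    (hlt : evalNat w₀ < evalNat w₁) (hkl : k < l) :
    evalNat (spliceWord W w₀ k l) < evalNat (spliceWord W w₁ k l) := by
  have hpow := evalNat_wordPow_lt_evalNat_wordPow hlen hlt (Nat.sub_ne_zero_of_lt hkl)
  simp only [spliceWord, evalNat_append, length_wordPow, hlen]
  gcongr

/-- How much the value of the first `k` blocks of `W` exceeds the value of `k` copies of `w`. It is
integer-valued because it may be negative. -/
def prefixExcess (W w : List (Fin d)) (k : ℕ) : ℤ :=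
  evalNat (W.take (w.length * k)) - evalNat (wordPow w k)

theorem evalNat_spliceWord (hkl : k ≤ l) (hl : w.length * l ≤ W.length) :
    (evalNat (spliceWord W w k l) : ℤ) =
      evalNat W - (prefixExcess W w l - prefixExcess W w k) := by
  obtain ⟨e, rfl⟩ := Nat.exists_eq_add_of_le hkl
  have hk : w.length * k ≤ W.length := (Nat.mul_le_mul_left _ hkl).trans hl
  have hW : evalNat W = evalNat (W.take (w.length * (k + e))) +
      d ^ (w.length * (k + e)) * evalNat (W.drop (w.length * (k + e))) := by
    conv_lhs => rw [← List.take_append_drop (w.length * (k + e)) W, evalNat_append,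
      List.length_take_of_le hl]
  rw [spliceWord, prefixExcess, prefixExcess, Nat.add_sub_cancel_left, wordPow_add, hW]
  simp only [evalNat_append, length_wordPow, List.length_take_of_le hk]
  push_cast
  ring

theorem prefixExcess_lt_prefixExcess (hd : 0 < d) (hlen : w₀.length = w₁.length)
    (hlt : evalNat w₀ < evalNat w₁) (hkl : k < l) (hl : w₀.length * l ≤ W.length)
    (hle : evalNat (spliceWord W w₁ k l) ≤ evalNat W) :
    prefixExcess W w₀ k < prefixExcess W w₀ l := by
  have hval := evalNat_spliceWord hkl.le hl
  have hsplice := evalNat_spliceWord_lt_evalNat_spliceWord (W := W) hd hlen hlt hkl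
  omega

theorem exists_add_mem_image_evalNat_iff_le {ι : Type*} [LinearOrder ι] [OrderBot ι] (hd : 0 < d)
    {L q : Language (Fin d)} (hW : W ∈ L)
    (hmax : ∀ ρ ∈ L, ρ.length = W.length → evalNat ρ ≤ evalNat W)
    (h₀ : w₀ ∈ loopWords q) (h₁ : w₁ ∈ loopWords q) (hlen : w₀.length = w₁.length)
    (hlt : evalNat w₀ < evalNat w₁) {m : ι → ℕ} (hm : StrictMono m)
    (hmW : ∀ i, w₀.length * m i ≤ W.length)
    (hq : ∀ i, L.leftQuotient (W.take (w₀.length * m i)) = q) :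
    ∃ a b : ι → ℕ, ∀ i j,
      a i + b j ∈ evalNat '' {ρ ∈ (L : Set (List (Fin d))) | ρ.length = W.length} ↔ i ≤ j := by
  refine exists_add_mem_iff_le_of_strictMono (B := evalNat W)
    (G := fun i => prefixExcess W w₀ (m i)) ?_ (fun i j hij => ?_) (fun i j hij => ?_)
  · rintro _ ⟨ρ, ⟨hρ, hρlen⟩, rfl⟩
    exact hmax ρ hρ hρlen
  · refine prefixExcess_lt_prefixExcess hd hlen hlt (hm hij) (hmW j) (hmax _ ?_ ?_)
    · exact spliceWord_mem hW h₁ (hlen ▸ hq i) (hlen ▸ hq j)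
    · exact length_spliceWord (hm hij).le (hlen ▸ hmW j)
  · have hmij : m i ≤ m j := hm.monotone hij
    exact ⟨_, ⟨_, ⟨spliceWord_mem hW h₀ (hq i) (hq j), length_spliceWord hmij (hmW j)⟩, rfl⟩,
      evalNat_spliceWord hmij (hmW j)⟩

end Value

theorem stmt11_general {d : ℕ} {L : Set (List (Fin d))} (hreg : RegularLang L)
    (hns : ¬ SparseLang L) (happ : ∀ a ∈ L, ∀ b ∈ L, a ++ b ∈ L) (N : ℕ) :
    ∃ (K : ℕ) (D E : Fin (N + 1) → List (Fin d)),
      ∀ i j : Fin (N + 1),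
        (∃ ρ : List (Fin d), ρ.length = K ∧ evalNat ρ = evalNat (D i) + evalNat (E j) ∧ ρ ∈ L)
          ↔ i ≤ j := by
  obtain ⟨u, hu, v, hv, huv, hlen⟩ := exists_ne_length_eq_of_not_sparseLang hreg hns
  have hd : 1 < d := Fin.nontrivial_iff_two_le.mp (nontrivial_of_ne_of_length_eq huv hlen)
  have hu0 : u.length ≠ 0 := length_ne_zero_of_ne_of_length_eq huv hlen
  obtain ⟨C, hC, hpair⟩ := exists_forall_hasLoopPair_leftQuotient hreg happ hu hv huv hlen
  have := (Language.IsRegular.finite_range_leftQuotient hreg).to_subtype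
  obtain ⟨M, hM⟩ := exists_strictMono_forall_lt_and_eq (β := Set.range (Language.leftQuotient L)) N
  have hlong : wordPow u (C * (M + 1)) ∈ L :=
    wordPow_mem happ hu (Nat.mul_ne_zero hC M.succ_ne_zero)
  obtain ⟨W, hW, hWlen, hmax⟩ := exists_mem_length_eq_forall_evalNat_le hlong
  obtain ⟨⟨_, x, rfl⟩, m, hm, hmx⟩ := hM fun k => ⟨_, W.take (C * k), rfl⟩
  obtain ⟨w₀, h₀, w₁, h₁, rfl, hlen₁, hlt⟩ := (hpair x).exists_evalNat_lt hd
  have hmW (i : Fin (N + 1)) : w₀.length * m i ≤ W.length := by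
    rw [hWlen, length_wordPow]
    exact (Nat.mul_le_mul_left _ ((hmx i).1.le.trans M.le_succ)).trans
      (Nat.le_mul_of_pos_left _ (Nat.pos_of_ne_zero hu0))
  obtain ⟨a, b, hab⟩ := exists_add_mem_image_evalNat_iff_le (zero_lt_one.trans hd) hW hmax h₀ h₁
    hlen₁.symm hlt hm hmW fun i => congrArg Subtype.val (hmx i).2
  choose D hD using fun i => evalNat_surjective hd (a i)
  choose E hE using fun j => evalNat_surjective hd (b j)
  refine ⟨W.length, D, E, fun i j => ?_⟩
  rw [hD, hE, ← hab i j]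
  exact ⟨fun ⟨ρ, hρlen, hval, hρ⟩ => ⟨ρ, ⟨hρ, hρlen⟩, hval⟩,
    fun ⟨ρ, ⟨hρ, hρlen⟩, hval⟩ => ⟨ρ, hρlen, hval, hρ⟩⟩

theorem stmt11 (d : ℕ) (hd : 2 ≤ d) (L : Set (List (Fin d)))
    (hreg : RegularLang L) (hns : ¬ SparseLang L)
    (hstar : L = KStarLang L) (hdag : CondDagger L) :
    ∀ N : ℕ, ∃ (K : ℕ) (D E : Fin (N + 1) → List (Fin d)),
      ∀ i j : Fin (N + 1),
        (∃ ρ : List (Fin d), ρ.length = K ∧ evalNat ρ = evalNat (D i) + evalNat (E j) ∧ ρ ∈ L)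
          ↔ i ≤ j :=
  stmt11_general hreg hns fun _ ha _ hb => append_mem_of_eq_kStarLang hstar ha hb
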